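/- Let A = (Q, X, q₀, T, F) be an updateable timed automaton and K = 1 + |Q|·|X|·(|X|+1). The least solution {G(q)}_{q ∈ Q} of the state-based guard equations for updateable timed automata is finite (i.e., G(q) = ⋃_i G^i(q) is a finite set of constraints for every q) if and only if G^K(q) is green for all q ∈ Q. -/

import Mathlib

open scoped NNReal

/-! ## Atomic constraints over a set of clocks -/

/-- Comparison operator `◁ ∈ {<, ≤}`. -/
inductive Ineq : Type where
  | lt : Ineq
  | le : Ineq
deriving DecidableEq

/-- Interpretation of a comparison operator on reals. -/
def Ineq.holds : Ineq → ℝ → ℝ → Prop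
  | .lt, a, b => a < b
  | .le, a, b => a ≤ b

/-- Atomic constraints over clocks `X`:
`upper x o c` is `x ◁ c` (c ∈ ℕ), `lower c o x` is `c ◁ x` (c ∈ ℕ),
`diag x y o d` is `x - y ◁ d` (d ∈ ℤ). -/
inductive Constr (X : Type) : Type where
  | upper : X → Ineq → ℕ → Constr X
  | lower : ℕ → Ineq → X → Constr X
  | diag : X → X → Ineq → ℤ → Constr X
deriving DecidableEq

namespace Constr

/-- Is the constraint a diagonal constraint `x - y ◁ d`? -/
def isDiag {X : Type} : Constr X → Bool
  | .diag _ _ _ _ => true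
  | _ => false

/-- The integer constant of a constraint. -/
def constOf {X : Type} : Constr X → ℤ
  | .upper _ _ c => (c : ℤ)
  | .lower c _ _ => (c : ℤ)
  | .diag _ _ _ d => d

/-- Satisfaction of a constraint by a clock valuation `v : X → ℝ≥0`. -/
def sat {X : Type} (v : X → ℝ≥0) : Constr X → Prop
  | .upper x o c => o.holds (v x : ℝ) (c : ℝ)
  | .lower c o x => o.holds (c : ℝ) (v x : ℝ)
  | .diag x y o d => o.holds ((v x : ℝ) - (v y : ℝ)) (d : ℝ)

end Constr

/-- Time elapse: `v + δ`. -/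
def shift {X : Type} (v : X → ℝ≥0) (δ : ℝ≥0) : X → ℝ≥0 := fun x => v x + δ

/-- The relation `v ⊑_G v'`: for all `φ ∈ G` and all delays `δ ≥ 0`,
`v + δ ⊨ φ` implies `v' + δ ⊨ φ`. -/
def simG {X : Type} (G : Set (Constr X)) (v v' : X → ℝ≥0) : Prop :=
  ∀ φ ∈ G, ∀ δ : ℝ≥0, Constr.sat (shift v δ) φ → Constr.sat (shift v' δ) φ

/-- `Z ⊑_G Z'` on sets of valuations. -/
def simGZ {X : Type} (G : Set (Constr X)) (Z Z' : Set (X → ℝ≥0)) : Prop :=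
  ∀ v ∈ Z, ∃ v' ∈ Z', simG G v v'

open Classical in
/-- `[R]v`: reset the clocks in `R` to `0`. -/
noncomputable def reset {X : Type} (R : Set X) (v : X → ℝ≥0) : X → ℝ≥0 :=
  fun x => if x ∈ R then 0 else v x

/-- Weakest precondition `wp(⊑_φ, R)` of a single constraint over a reset. -/
def wpReset {X : Type} (R : Set X) : Constr X → Set (Constr X)
  | .upper x o c => {ψ | x ∉ R ∧ ψ = .upper x o c}
  | .lower c o x => {ψ | x ∉ R ∧ ψ = .lower c o x}
  | .diag x y o d =>
      {ψ | (x ∉ R ∧ y ∉ R ∧ ψ = .diag x y o d) ∨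
           (x ∉ R ∧ y ∈ R ∧ 0 ≤ d ∧ ψ = .upper x o d.toNat) ∨
           (x ∈ R ∧ y ∉ R ∧ 0 ≤ -d ∧ ψ = .lower (-d).toNat o y)}

/-- Weakest precondition `wp(⊑_G, R)` of a set of constraints over a reset. -/
def wpResetSet {X : Type} (R : Set X) (G : Set (Constr X)) : Set (Constr X) :=
  ⋃ φ ∈ G, wpReset R φ

/-! ## Timed automata -/

/-- A transition: source state, guard (finite conjunction of constraints),
reset set, target state. -/
abbrev TTrans (Q X : Type) : Type := Q × Finset (Constr X) × Set X × Q

def TTrans.src {Q X : Type} (t : TTrans Q X) : Q := t.1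
def TTrans.grd {Q X : Type} (t : TTrans Q X) : Finset (Constr X) := t.2.1
def TTrans.rst {Q X : Type} (t : TTrans Q X) : Set X := t.2.2.1
def TTrans.tgt {Q X : Type} (t : TTrans Q X) : Q := t.2.2.2

/-- A timed automaton. -/
structure TA (Q X : Type) : Type where
  init : Q
  trans : Finset (TTrans Q X)
  acc : Set Q

/-- Action step of a timed automaton along transition `t`. -/
def Step {Q X : Type} (A : TA Q X) (t : TTrans Q X) (c c' : Q × (X → ℝ≥0)) : Prop :=
  t ∈ A.trans ∧ TTrans.src t = c.1 ∧ (∀ φ ∈ TTrans.grd t, Constr.sat c.2 φ) ∧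
    c'.1 = TTrans.tgt t ∧ c'.2 = reset (TTrans.rst t) c.2

/-- `r` is a simulation on the configurations of `A`: a reflexive transitive
relation, relating only configurations with equal states, compatible with
delays and action transitions. -/
def IsSimulation {Q X : Type} (A : TA Q X)
    (r : (Q × (X → ℝ≥0)) → (Q × (X → ℝ≥0)) → Prop) : Prop :=
  Reflexive r ∧ Transitive r ∧
  ∀ q v q' v', r (q, v) (q', v') →
    q = q' ∧
    (∀ δ : ℝ≥0, ∃ δ' : ℝ≥0, r (q, shift v δ) (q, shift v' δ')) ∧
    (∀ t c₁, Step A t (q, v) c₁ →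
      ∃ v₁', Step A t (q, v') (c₁.1, v₁') ∧ r c₁ (c₁.1, v₁'))

/-- The state-based guard equations:
`G(q) = ⋃_{(q,g,R,q₁) ∈ T} ({g} ∪ wp(⊑_{G(q₁)}, R))`. -/
def GuardEq {Q X : Type} (A : TA Q X) (G : Q → Set (Constr X)) : Prop :=
  ∀ q, G q = ⋃ t ∈ A.trans, ⋃ (_ : TTrans.src t = q),
    ((TTrans.grd t : Set (Constr X)) ∪ wpResetSet (TTrans.rst t) (G (TTrans.tgt t)))

/-! ## LU bounds -/

def lowerConstAt {X : Type} [DecidableEq X] (x : X) : Constr X → WithBot ℕ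
  | .lower c _ y => if y = x then (c : WithBot ℕ) else ⊥
  | _ => ⊥

def upperConstAt {X : Type} [DecidableEq X] (x : X) : Constr X → WithBot ℕ
  | .upper y _ c => if y = x then (c : WithBot ℕ) else ⊥
  | _ => ⊥

/-- `L_G(x)`: maximum constant among lower-bound constraints `c ◁ x` in `G`
(`⊥ = -∞` if none). -/
def Lbound {X : Type} [DecidableEq X] (G : Finset (Constr X)) (x : X) : WithBot ℕ :=
  G.sup (lowerConstAt x)

/-- `U_G(x)`: maximum constant among upper-bound constraints `x ◁ c` in `G`
(`⊥ = -∞` if none). -/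
def Ubound {X : Type} [DecidableEq X] (G : Finset (Constr X)) (x : X) : WithBot ℕ :=
  G.sup (upperConstAt x)

/-- The LU simulation `v ≼_LU v'` for bounds functions `L U : X → ℕ ∪ {-∞}`. -/
def luSim {X : Type} (L U : X → WithBot ℕ) (v v' : X → ℝ≥0) : Prop :=
  ∀ x : X,
    (v' x < v x → (L x).map (fun c : ℕ => (c : ℝ)) < ((v' x : ℝ) : WithBot ℝ)) ∧
    (v x < v' x → (U x).map (fun c : ℕ => (c : ℝ)) < ((v x : ℝ) : WithBot ℝ))

/-- The relation `v ⊑^LU_G v'`: `v ≼_{LU(G)} v'` and every diagonal constraint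
of `G` satisfied by `v` is satisfied by `v'`. -/
def luglu {X : Type} [DecidableEq X] (G : Finset (Constr X)) (v v' : X → ℝ≥0) : Prop :=
  luSim (Lbound G) (Ubound G) v v' ∧
    ∀ φ ∈ G, φ.isDiag → Constr.sat v φ → Constr.sat v' φ

/-- Lifting a relation on valuations to sets of valuations. -/
def zoneRel {X : Type} (r : (X → ℝ≥0) → (X → ℝ≥0) → Prop) (Z Z' : Set (X → ℝ≥0)) : Prop :=
  ∀ v ∈ Z, ∃ v' ∈ Z', r v v'

/-! ## Runs of timed automata -/

/-- `stepsFrom A c l`: the alternating delay-action sequence `l` is a valid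
sequence of steps of `A` starting at configuration `c`. -/
def stepsFrom {Q X : Type} (A : TA Q X) :
    (Q × (X → ℝ≥0)) → List (ℝ≥0 × TTrans Q X) → Prop
  | _, [] => True
  | c, (δ, t) :: l =>
      t ∈ A.trans ∧ TTrans.src t = c.1 ∧
      (∀ φ ∈ TTrans.grd t, Constr.sat (shift c.2 δ) φ) ∧
      stepsFrom A (TTrans.tgt t, reset (TTrans.rst t) (shift c.2 δ)) l

/-- Configuration reached after a sequence of delay-action steps. -/
noncomputable def endConfig {Q X : Type} :
    (Q × (X → ℝ≥0)) → List (ℝ≥0 × TTrans Q X) → (Q × (X → ℝ≥0))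
  | c, [] => c
  | c, (δ, t) :: l => endConfig (TTrans.tgt t, reset (TTrans.rst t) (shift c.2 δ)) l

/-- A run of `A`: a valid sequence of delay-action steps from `(q₀, 0̄)`. -/
def TA.Run {Q X : Type} (A : TA Q X) : Type :=
  {l : List (ℝ≥0 × TTrans Q X) // stepsFrom A (A.init, fun _ => 0) l}

/-- A run is accepting if it ends in an accepting state. -/
def TA.Accepting {Q X : Type} (A : TA Q X) (r : A.Run) : Prop :=
  (endConfig (A.init, fun _ => 0) r.val).1 ∈ A.acc

/-- `A` is diagonal-free: no guard contains a diagonal constraint. -/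
def DiagFree {Q X : Type} (A : TA Q X) : Prop :=
  ∀ t ∈ A.trans, ∀ φ ∈ TTrans.grd t, ¬ φ.isDiag

/-- The (finite) set of diagonal constraints occurring in guards of `A`. -/
def diagGuards {Q X : Type} [DecidableEq X] (A : TA Q X) : Finset (Constr X) :=
  A.trans.biUnion fun t => (TTrans.grd t).filter fun φ => φ.isDiag

/-! ## Updateable timed automata -/

/-- Atomic update of a clock: `x := c` or `x := y + d`. -/
inductive AtomicUp (X : Type) : Type where
  | const : ℕ → AtomicUp X
  | add : X → ℤ → AtomicUp X
deriving DecidableEq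

/-- `up(v) : X → ℝ` (may be negative). -/
def applyUpd {X : Type} (up : X → AtomicUp X) (v : X → ℝ≥0) : X → ℝ :=
  fun x => match up x with
    | .const c => (c : ℝ)
    | .add y d => (v y : ℝ) + (d : ℝ)

/-- Weakest precondition `wp(⊑_φ, up)` of a single constraint over an update. -/
def wpUpd {X : Type} [DecidableEq X] (up : X → AtomicUp X) : Constr X → Set (Constr X)
  | .upper x o c =>
      match up x with
      | .const _ => ∅
      | .add y d => if 0 ≤ (c : ℤ) - d then {Constr.upper y o ((c : ℤ) - d).toNat} else ∅
  | .lower c o x =>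
      match up x with
      | .const _ => ∅
      | .add y d => if 0 ≤ (c : ℤ) - d then {Constr.lower ((c : ℤ) - d).toNat o y} else ∅
  | .diag x y o c =>
      match up x, up y with
      | .const _, .const _ => ∅
      | .add y₁ d₁, .const c₂ =>
          if 0 ≤ c + (c₂ : ℤ) - d₁ then {Constr.upper y₁ o (c + (c₂ : ℤ) - d₁).toNat} else ∅
      | .const c₁, .add y₂ d₂ =>
          if 0 ≤ (c₁ : ℤ) - d₂ - c then {Constr.lower ((c₁ : ℤ) - d₂ - c).toNat o y₂} else ∅
      | .add y₁ d₁, .add y₂ d₂ =>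
          if y₁ = y₂ then ∅ else {Constr.diag y₁ y₂ o (c - d₁ + d₂)}

/-- Weakest precondition `wp(⊑_G, up)` of a set of constraints over an update. -/
def wpUpdSet {X : Type} [DecidableEq X] (up : X → AtomicUp X) (G : Set (Constr X)) :
    Set (Constr X) :=
  ⋃ φ ∈ G, wpUpd up φ

/-- The set of constraints `{0 ≤ x | x ∈ X}`. -/
def nonnegConstrs (X : Type) : Set (Constr X) := {φ | ∃ x : X, φ = Constr.lower 0 Ineq.le x}

/-- A transition of an updateable timed automaton: source, guard, update, target. -/
abbrev UTrans (Q X : Type) : Type := Q × Finset (Constr X) × (X → AtomicUp X) × Q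

def UTrans.src {Q X : Type} (t : UTrans Q X) : Q := t.1
def UTrans.grd {Q X : Type} (t : UTrans Q X) : Finset (Constr X) := t.2.1
def UTrans.upd {Q X : Type} (t : UTrans Q X) : X → AtomicUp X := t.2.2.1
def UTrans.tgt {Q X : Type} (t : UTrans Q X) : Q := t.2.2.2

/-- An updateable timed automaton. -/
structure UTA (Q X : Type) : Type where
  init : Q
  trans : Finset (UTrans Q X)
  acc : Set Q

/-- Action step of an updateable timed automaton along transition `t`:
the guard holds, `up(v) ≥ 0`, and the new valuation is `up(v)`. -/
def UStep {Q X : Type} (A : UTA Q X) (t : UTrans Q X) (c c' : Q × (X → ℝ≥0)) : Prop :=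
  t ∈ A.trans ∧ UTrans.src t = c.1 ∧ (∀ φ ∈ UTrans.grd t, Constr.sat c.2 φ) ∧
    c'.1 = UTrans.tgt t ∧ ∀ x, (c'.2 x : ℝ) = applyUpd (UTrans.upd t) c.2 x

/-- `r` is a simulation on configurations of an updateable timed automaton. -/
def IsSimulationU {Q X : Type} (A : UTA Q X)
    (r : (Q × (X → ℝ≥0)) → (Q × (X → ℝ≥0)) → Prop) : Prop :=
  Reflexive r ∧ Transitive r ∧
  ∀ q v q' v', r (q, v) (q', v') →
    q = q' ∧
    (∀ δ : ℝ≥0, ∃ δ' : ℝ≥0, r (q, shift v δ) (q, shift v' δ')) ∧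
    (∀ t c₁, UStep A t (q, v) c₁ →
      ∃ v₁', UStep A t (q, v') (c₁.1, v₁') ∧ r c₁ (c₁.1, v₁'))

/-- State-based guard equations for updateable timed automata. -/
def GuardEqU {Q X : Type} [DecidableEq X] (A : UTA Q X) (G : Q → Set (Constr X)) : Prop :=
  ∀ q, G q = ⋃ t ∈ A.trans, ⋃ (_ : UTrans.src t = q),
    ((UTrans.grd t : Set (Constr X)) ∪ wpUpdSet (UTrans.upd t) (nonnegConstrs X)
      ∪ wpUpdSet (UTrans.upd t) (G (UTrans.tgt t)))

/-- Kleene iterates `G^i(q)` of the state-based guard equations. -/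
def iterG {Q X : Type} [DecidableEq X] (A : UTA Q X) : ℕ → Q → Set (Constr X)
  | 0 => fun q => ⋃ t ∈ A.trans, ⋃ (_ : UTrans.src t = q),
      ((UTrans.grd t : Set (Constr X)) ∪ wpUpdSet (UTrans.upd t) (nonnegConstrs X))
  | (i + 1) => fun q => iterG A i q ∪
      (⋃ t ∈ A.trans, ⋃ (_ : UTrans.src t = q),
        wpUpdSet (UTrans.upd t) (iterG A i (UTrans.tgt t)))

/-- `G^{i+1}(q)` is coloured red: a new diagonal constraint was added, or a new
non-diagonal constraint whose constant is strictly bigger than the constant of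
every non-diagonal constraint of the same kind on the same clock in `G^i(q)`. -/
def RedAt {Q X : Type} [DecidableEq X] (A : UTA Q X) : ℕ → Q → Prop
  | 0, _ => False
  | (i + 1), q =>
      (∃ φ : Constr X, φ ∈ iterG A (i + 1) q ∧ φ ∉ iterG A i q ∧ φ.isDiag) ∨
      (∃ (x : X) (o : Ineq) (c : ℕ),
        Constr.upper x o c ∈ iterG A (i + 1) q ∧ Constr.upper x o c ∉ iterG A i q ∧
        ∀ (o' : Ineq) (c' : ℕ), Constr.upper x o' c' ∈ iterG A i q → c' < c) ∨
      (∃ (x : X) (o : Ineq) (c : ℕ),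
        Constr.lower c o x ∈ iterG A (i + 1) q ∧ Constr.lower c o x ∉ iterG A i q ∧
        ∀ (o' : Ineq) (c' : ℕ), Constr.lower c' o' x ∈ iterG A i q → c' < c)

/-- `G^i(q)` is coloured green. -/
def GreenAt {Q X : Type} [DecidableEq X] (A : UTA Q X) (i : ℕ) (q : Q) : Prop :=
  ¬ RedAt A i q

/-- Absolute value of the constant of an atomic update. -/
def updBound {X : Type} : AtomicUp X → ℕ
  | .const c => c
  | .add _ d => d.natAbs

/-! ## Auxiliary notions for the proof -/

namespace UProof

/-- Comparison operator of a constraint. -/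
def ineqOf {X : Type} : Constr X → Ineq
  | .upper _ o _ => o
  | .lower _ o _ => o
  | .diag _ _ o _ => o

/-- Shape of a constraint, encoded so that it is injective on off-diagonal shapes. -/
def key {X : Type} : Constr X → X × Option X
  | .upper x _ _ => (x, none)
  | .lower _ _ x => (x, some x)
  | .diag x y _ _ => (x, some y)

/-- A diagonal constraint must be over two distinct clocks. -/
def Off {X : Type} : Constr X → Prop
  | .diag x y _ _ => x ≠ y
  | _ => True

/-- Add `k` to the constant. -/
def sh {X : Type} (k : ℤ) : Constr X → Constr X
  | .upper x o c => .upper x o ((c : ℤ) + k).toNat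
  | .lower c o x => .lower ((c : ℤ) + k).toNat o x
  | .diag x y o d => .diag x y o (d + k)

/-- Domination: same kind with larger constant; equality for diagonals. -/
def Dom {X : Type} : Constr X → Constr X → Prop
  | .upper x _ c, ψ => ∃ o c', ψ = .upper x o c' ∧ c ≤ c'
  | .lower c _ x, ψ => ∃ o c', ψ = .lower c' o x ∧ c ≤ c'
  | .diag x y o d, ψ => ψ = .diag x y o d

lemma dom_refl {X : Type} (φ : Constr X) : Dom φ φ := by
  cases φ <;> simp [Dom]

lemma dom_trans {X : Type} {φ ψ χ : Constr X} (h : Dom φ ψ) (h' : Dom ψ χ) : Dom φ χ := by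
  cases φ with
  | upper x o c =>
    obtain ⟨o1, c1, rfl, h1⟩ := h
    obtain ⟨o2, c2, rfl, h2⟩ := h'
    exact ⟨o2, c2, rfl, h1.trans h2⟩
  | lower c o x =>
    obtain ⟨o1, c1, rfl, h1⟩ := h
    obtain ⟨o2, c2, rfl, h2⟩ := h'
    exact ⟨o2, c2, rfl, h1.trans h2⟩
  | diag x y o d =>
    simp only [Dom] at h
    subst h
    exact h'

lemma dom_sh {X : Type} {φ : Constr X} (hφ : φ.isDiag = false) {k : ℤ} (hk : 0 ≤ k) :
    Dom φ (sh k φ) := by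
  cases φ with
  | upper x o c => exact ⟨_, _, rfl, by omega⟩
  | lower c o x => exact ⟨_, _, rfl, by omega⟩
  | diag x y o d => simp [Constr.isDiag] at hφ

lemma ineq_univ_finite : (Set.univ : Set Ineq).Finite := by
  refine (Set.toFinite {Ineq.lt, Ineq.le}).subset ?_
  intro o _
  cases o <;> simp

lemma dom_finite {X : Type} (ψ : Constr X) : {φ | Dom φ ψ}.Finite := by
  have key1 : ∀ n : ℕ, ((Set.univ : Set Ineq) ×ˢ (Set.Iic n)).Finite :=
    fun n => ineq_univ_finite.prod (Set.finite_Iic n)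
  cases ψ with
  | upper x o c =>
    refine ((key1 c).image (fun p => Constr.upper x p.1 p.2)).subset ?_
    intro φ hφ
    cases φ <;> simp_all [Dom]
  | lower c o x =>
    refine ((key1 c).image (fun p => Constr.lower p.2 p.1 x)).subset ?_
    intro φ hφ
    cases φ <;> simp_all [Dom]
  | diag x y o d =>
    refine (Set.finite_singleton (Constr.diag x y o d)).subset ?_
    intro φ hφ
    cases φ <;> simp_all [Dom]

lemma eq_sh {X : Type} {φ ψ : Constr X} (h1 : Off φ) (h2 : Off ψ) (hk : key φ = key ψ)
    (ho : ineqOf φ = ineqOf ψ) :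
    ψ = sh (ψ.constOf - φ.constOf) φ ∧ ψ.isDiag = φ.isDiag := by
  cases φ <;> cases ψ <;> simp_all [Off, key, ineqOf, sh, Constr.constOf, Constr.isDiag]
  exact h2 (hk.1.symm.trans hk.2)

/-- Admissible shifts. -/
def Ok {X : Type} (k : ℤ) (φ : Constr X) : Prop := φ.isDiag = true ∨ 0 ≤ k

lemma constOf_sh {X : Type} {φ : Constr X} {k : ℤ} (h : Ok k φ) :
    (sh k φ).constOf = φ.constOf + k := by
  cases φ <;> simp_all [Ok, sh, Constr.constOf, Constr.isDiag] <;> omega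

lemma sh_sh {X : Type} {φ : Constr X} {k l : ℤ} (h : Ok k φ) :
    sh l (sh k φ) = sh (k + l) φ := by
  cases φ <;> simp_all [Ok, sh, Constr.isDiag] <;> omega

lemma sh_zero {X : Type} (φ : Constr X) : sh 0 φ = φ := by
  cases φ <;> simp [sh]

section
variable {X : Type} [DecidableEq X]

lemma wp_basic {up : X → AtomicUp X} {φ ψ : Constr X} (h : ψ ∈ wpUpd up φ) :
    Off φ ∧ Off ψ ∧ ineqOf φ = ineqOf ψ ∧ (ψ.isDiag = true → φ.isDiag = true) := by
  cases φ with
  | upper x o c =>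
    cases hx : up x <;> simp only [wpUpd, hx] at h
    · simp at h
    · split_ifs at h <;> simp at h
      subst h; simp [Off, ineqOf, Constr.isDiag]
  | lower c o x =>
    cases hx : up x <;> simp only [wpUpd, hx] at h
    · simp at h
    · split_ifs at h <;> simp at h
      subst h; simp [Off, ineqOf, Constr.isDiag]
  | diag x y o d =>
    have hne : x ≠ y := by
      rintro rfl
      cases hx : up x <;> simp [wpUpd, hx] at h
    cases hx : up x <;> cases hy : up y <;> simp only [wpUpd, hx, hy] at h
    · simp at h
    all_goals
      split_ifs at h <;> simp at h
      subst h; simp_all [Off, ineqOf, Constr.isDiag]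

lemma wp_sh {up : X → AtomicUp X} {φ ψ : Constr X} (h : ψ ∈ wpUpd up φ)
    (hd : ψ.isDiag = φ.isDiag) {k : ℤ} (hk : Ok k φ) : sh k ψ ∈ wpUpd up (sh k φ) := by
  cases φ with
  | upper x o c =>
    have hk' : 0 ≤ k := by simpa [Ok, Constr.isDiag] using hk
    cases hx : up x <;> simp only [wpUpd, hx] at h
    · simp at h
    · split_ifs at h with h0 <;> simp at h
      subst h
      simp only [sh, wpUpd, hx]
      rw [if_pos (by omega)]
      simp; omega
  | lower c o x =>
    have hk' : 0 ≤ k := by simpa [Ok, Constr.isDiag] using hk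
    cases hx : up x <;> simp only [wpUpd, hx] at h
    · simp at h
    · split_ifs at h with h0 <;> simp at h
      subst h
      simp only [sh, wpUpd, hx]
      rw [if_pos (by omega)]
      simp; omega
  | diag x y o d =>
    cases hx : up x <;> cases hy : up y <;> simp only [wpUpd, hx, hy] at h
    · simp at h
    · split_ifs at h <;> simp at h
      subst h; simp [Constr.isDiag] at hd
    · split_ifs at h <;> simp at h
      subst h; simp [Constr.isDiag] at hd
    · split_ifs at h with h0 <;> simp at h
      subst h
      simp only [sh, wpUpd, hx, hy]
      rw [if_neg h0]
      simp; omega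

lemma wp_dom {up : X → AtomicUp X} {φ ψ φ' : Constr X} (h : ψ ∈ wpUpd up φ)
    (hd : Dom φ φ') : ∃ ψ' ∈ wpUpd up φ', Dom ψ ψ' := by
  cases φ with
  | upper x o c =>
    obtain ⟨o', c', rfl, hc⟩ := hd
    cases hx : up x <;> simp only [wpUpd, hx] at h ⊢
    · simp at h
    · split_ifs at h with h0 <;> simp at h
      subst h
      rw [if_pos (by omega)]
      exact ⟨_, rfl, _, _, rfl, by omega⟩
  | lower c o x =>
    obtain ⟨o', c', rfl, hc⟩ := hd
    cases hx : up x <;> simp only [wpUpd, hx] at h ⊢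
    · simp at h
    · split_ifs at h with h0 <;> simp at h
      subst h
      rw [if_pos (by omega)]
      exact ⟨_, rfl, _, _, rfl, by omega⟩
  | diag x y o d =>
    simp only [Dom] at hd
    subst hd
    exact ⟨ψ, h, dom_refl ψ⟩

lemma wp_finite (up : X → AtomicUp X) (φ : Constr X) : (wpUpd up φ).Finite := by
  cases φ with
  | upper x o c =>
    cases hx : up x <;> simp only [wpUpd, hx]
    · simp
    · split_ifs <;> simp
  | lower c o x =>
    cases hx : up x <;> simp only [wpUpd, hx]
    · simp
    · split_ifs <;> simp
  | diag x y o d =>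
    cases hx : up x <;> cases hy : up y <;> simp only [wpUpd, hx, hy]
    · simp
    all_goals split_ifs <;> simp

variable {Q : Type} (A : UTA Q X)

/-- One propagation step. -/
def S (a b : Q × Constr X) : Prop :=
  ∃ t ∈ A.trans, UTrans.src t = b.1 ∧ UTrans.tgt t = a.1 ∧ b.2 ∈ wpUpd (UTrans.upd t) a.2

lemma mem_succ {i : ℕ} {q : Q} {ψ : Constr X} :
    ψ ∈ iterG A (i + 1) q ↔
      ψ ∈ iterG A i q ∨ ∃ a : Q × Constr X, a.2 ∈ iterG A i a.1 ∧ S A a (q, ψ) := by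
  simp only [iterG, Set.mem_union, Set.mem_iUnion, wpUpdSet, S]
  refine or_congr_right ?_
  constructor
  · rintro ⟨t, ht, hs, φ, hφ, h⟩
    exact ⟨(UTrans.tgt t, φ), hφ, t, ht, hs, rfl, h⟩
  · rintro ⟨⟨q', φ⟩, hφ, t, ht, hs, h1, h⟩
    simp only at h1 hφ hs
    subst h1
    exact ⟨t, ht, hs, φ, hφ, h⟩

lemma iter_mono {i j : ℕ} (h : i ≤ j) (q : Q) : iterG A i q ⊆ iterG A j q := by
  induction h with
  | refl => exact subset_rfl
  | step _ ih => exact ih.trans fun ψ hψ => (mem_succ A).2 (Or.inl hψ)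

lemma iter_finite [Fintype X] (i : ℕ) : ∀ q : Q, (iterG A i q).Finite := by
  have hfin : ∀ (t : UTrans Q X) (G : Set (Constr X)), G.Finite →
      (wpUpdSet (UTrans.upd t) G).Finite := fun t G hG =>
    hG.biUnion fun φ _ => wp_finite _ φ
  induction i with
  | zero =>
    intro q
    simp only [iterG]
    refine A.trans.finite_toSet.biUnion fun t _ => Set.finite_iUnion fun _ => ?_
    refine (Finset.finite_toSet _).union (hfin t _ ?_)
    refine (Set.finite_range (fun x : X => Constr.lower 0 Ineq.le x)).subset ?_
    rintro _ ⟨x, rfl⟩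
    exact ⟨x, rfl⟩
  | succ i ih =>
    intro q
    simp only [iterG]
    refine (ih q).union ?_
    exact A.trans.finite_toSet.biUnion fun t _ => Set.finite_iUnion fun _ => hfin t _ (ih _)

lemma red_iff (i : ℕ) (q : Q) :
    RedAt A (i + 1) q ↔ ∃ φ ∈ iterG A (i + 1) q, ∀ ψ ∈ iterG A i q, ¬ Dom φ ψ := by
  simp only [RedAt]
  constructor
  · rintro (⟨φ, h1, h2, h3⟩ | ⟨x, o, c, h1, h2, h3⟩ | ⟨x, o, c, h1, h2, h3⟩)
    · refine ⟨φ, h1, fun ψ hψ hd => ?_⟩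
      cases φ with
      | upper x o c => simp [Constr.isDiag] at h3
      | lower c o x => simp [Constr.isDiag] at h3
      | diag x y o d =>
        simp only [Dom] at hd
        subst hd
        exact h2 hψ
    · refine ⟨_, h1, ?_⟩
      rintro ψ hψ ⟨o', c', rfl, hc⟩
      exact absurd (h3 _ _ hψ) (by omega)
    · refine ⟨_, h1, ?_⟩
      rintro ψ hψ ⟨o', c', rfl, hc⟩
      exact absurd (h3 _ _ hψ) (by omega)
  · rintro ⟨φ, h1, h2⟩
    have h3 : φ ∉ iterG A i q := fun h => h2 φ h (dom_refl φ)
    cases φ with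
    | upper x o c =>
      refine Or.inr (Or.inl ⟨x, o, c, h1, h3, fun o' c' h => ?_⟩)
      by_contra hc
      exact h2 _ h ⟨o', c', rfl, by omega⟩
    | lower c o x =>
      refine Or.inr (Or.inr ⟨x, o, c, h1, h3, fun o' c' h => ?_⟩)
      by_contra hc
      exact h2 _ h ⟨o', c', rfl, by omega⟩
    | diag x y o d => exact Or.inl ⟨_, h1, h3, rfl⟩

lemma finite_of_green [Fintype X] (M : ℕ) (h : ∀ q, GreenAt A (M + 1) q) (q : Q) :
    (⋃ i : ℕ, iterG A i q).Finite := by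
  have hg : ∀ q, ∀ φ ∈ iterG A (M + 1) q, ∃ ψ ∈ iterG A M q, Dom φ ψ := by
    intro q φ hφ
    by_contra hc
    push Not at hc
    exact h q ((red_iff A M q).2 ⟨φ, hφ, hc⟩)
  have hP : ∀ j q, ∀ φ ∈ iterG A (M + j) q, ∃ ψ ∈ iterG A M q, Dom φ ψ := by
    intro j
    induction j with
    | zero => exact fun q φ hφ => ⟨φ, hφ, dom_refl φ⟩
    | succ j ih =>
      intro q φ hφ
      rcases (mem_succ A).1 hφ with h1 | ⟨⟨q', φ'⟩, h1, t, ht, hs, htg, hw⟩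
      · exact ih q φ h1
      · obtain ⟨ψ', hψ', hd'⟩ := ih q' φ' h1
        obtain ⟨χ, hχ, hd⟩ := wp_dom hw hd'
        obtain ⟨ψ, hψ, hd2⟩ := hg q χ
          ((mem_succ A).2 (Or.inr ⟨(q', ψ'), hψ', t, ht, hs, htg, hχ⟩))
        exact ⟨ψ, hψ, dom_trans hd hd2⟩
  refine ((iter_finite A M q).biUnion fun ψ _ => dom_finite ψ).subset ?_
  intro φ hφ
  obtain ⟨i, hi⟩ := Set.mem_iUnion.1 hφ
  obtain ⟨ψ, hψ, hd⟩ := hP i q φ (iter_mono A (Nat.le_add_left i M) q hi)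
  exact Set.mem_biUnion hψ hd

lemma chain (i : ℕ) : ∀ (q : Q) (ψ : Constr X), ψ ∈ iterG A i q →
    (∀ j < i, ψ ∉ iterG A j q) →
    ∃ f : ℕ → Q × Constr X, f i = (q, ψ) ∧ (∀ j < i, S A (f j) (f (j + 1))) ∧
      (∀ j ≤ i, (f j).2 ∈ iterG A j (f j).1) ∧
      (∀ j ≤ i, ∀ l < j, (f j).2 ∉ iterG A l (f j).1) := by
  induction i with
  | zero =>
    intro q ψ h _
    refine ⟨fun _ => (q, ψ), rfl, by simp, ?_, ?_⟩
    · intro j hj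
      obtain rfl : j = 0 := by omega
      exact h
    · intro j hj l hl
      omega
  | succ i ih =>
    intro q ψ h hn
    rcases (mem_succ A).1 h with h1 | ⟨⟨q', φ⟩, h1, hS⟩
    · exact absurd h1 (hn i (by omega))
    · have hφ : ∀ j < i, φ ∉ iterG A j q' := by
        intro j hj hm
        exact hn (j + 1) (by omega) ((mem_succ A).2 (Or.inr ⟨(q', φ), hm, hS⟩))
      obtain ⟨f, hf, hs, hm, hnm⟩ := ih q' φ h1 hφ
      refine ⟨fun j => if j = i + 1 then (q, ψ) else f j, by simp, ?_, ?_, ?_⟩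
      · intro j hj
        simp only [if_neg (show j ≠ i + 1 by omega)]
        by_cases hji : j = i
        · subst hji
          simpa [hf] using hS
        · simp only [if_neg (show j + 1 ≠ i + 1 by omega)]
          exact hs j (by omega)
      · intro j hj
        by_cases hji : j = i + 1
        · subst hji; simpa using h
        · simp only [if_neg hji]
          exact hm j (by omega)
      · intro j hj l hl
        by_cases hji : j = i + 1
        · subst hji; simpa using hn l hl
        · simp only [if_neg hji]
          exact hnm j (by omega) l hl

/-- Shifting a path all of whose constraints have the same kind. -/
lemma path_sh (f : ℕ → Q × Constr X) (a n : ℕ) (k : ℤ)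
    (hs : ∀ j, a ≤ j → j < a + n → S A (f j) (f (j + 1)))
    (hd : ∀ j, a ≤ j → j ≤ a + n → (f j).2.isDiag = (f a).2.isDiag)
    (hk : Ok k (f a).2) (l : ℕ) (h : sh k (f a).2 ∈ iterG A l (f a).1) :
    sh k (f (a + n)).2 ∈ iterG A (l + n) (f (a + n)).1 := by
  induction n with
  | zero => exact h
  | succ n ih =>
    have h1 := ih (fun j h1 h2 => hs j h1 (by omega)) (fun j h1 h2 => hd j h1 (by omega))
    obtain ⟨t, ht, hsrc, htg, hw⟩ := hs (a + n) (by omega) (by omega)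
    refine (mem_succ A).2 (Or.inr ⟨((f (a + n)).1, sh k (f (a + n)).2), h1, t, ht, hsrc, htg, ?_⟩)
    have e1 := hd (a + n) (by omega) (by omega)
    have e2 := hd (a + n + 1) (by omega) (by omega)
    exact wp_sh hw (e2.trans e1.symm) (by unfold Ok at hk ⊢; rwa [e1])

lemma pump (f : ℕ → Q × Constr X) (a n : ℕ) (d : ℤ) (hd0 : d ≠ 0)
    (hs : ∀ j, a ≤ j → j < a + n → S A (f j) (f (j + 1)))
    (hd : ∀ j, a ≤ j → j ≤ a + n → (f j).2.isDiag = (f a).2.isDiag)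
    (hq : (f (a + n)).1 = (f a).1) (he : (f (a + n)).2 = sh d (f a).2)
    (hk : Ok d (f a).2) (h : (f a).2 ∈ iterG A a (f a).1) :
    ¬ (⋃ i : ℕ, iterG A i (f a).1).Finite := by
  have hok : ∀ m : ℕ, Ok ((m : ℤ) * d) (f a).2 := by
    intro m
    rcases hk with hk | hk
    · exact Or.inl hk
    · exact Or.inr (by positivity)
  have hm : ∀ m : ℕ, ∃ l, sh ((m : ℤ) * d) (f a).2 ∈ iterG A l (f a).1 := by
    intro m
    induction m with
    | zero => exact ⟨a, by simpa [sh_zero] using h⟩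
    | succ m ih =>
      obtain ⟨l, hl⟩ := ih
      have := path_sh A f a n _ hs hd (hok m) l hl
      rw [he, hq, sh_sh hk] at this
      refine ⟨l + n, ?_⟩
      have e : ((m + 1 : ℕ) : ℤ) * d = d + m * d := by push_cast; ring
      rw [e]
      exact this
  refine Set.infinite_of_injective_forall_mem (f := fun m : ℕ => sh ((m : ℤ) * d) (f a).2) ?_ ?_
  · intro m m' hmm
    have := congrArg Constr.constOf hmm
    simp only [constOf_sh (hok _)] at this
    have h2 : (m : ℤ) * d = m' * d := by linarith
    exact_mod_cast mul_right_cancel₀ hd0 h2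
  · intro m
    exact Set.mem_iUnion.2 (hm m)

lemma green_of_finite [Fintype Q] [Fintype X]
    (h : ∀ q, (⋃ i : ℕ, iterG A i q).Finite) (q : Q) :
    GreenAt A (Fintype.card Q * (Fintype.card X * (Fintype.card X + 1)) + 1) q := by
  intro hred
  set N := Fintype.card Q * (Fintype.card X * (Fintype.card X + 1)) with hN
  obtain ⟨ψ, hψ, hnd⟩ := (red_iff A N q).1 hred
  have hnew : ∀ j < N + 1, ψ ∉ iterG A j q := fun j hj hm =>
    hnd ψ (iter_mono A (by omega) q hm) (dom_refl ψ)
  obtain ⟨f, hf, hs, hm, hnm⟩ := chain A (N + 1) q ψ hψ hnew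
  have hbasic : ∀ j < N + 1, Off (f j).2 ∧ Off (f (j + 1)).2 ∧
      ineqOf (f j).2 = ineqOf (f (j + 1)).2 ∧
      ((f (j + 1)).2.isDiag = true → (f j).2.isDiag = true) := by
    intro j hj
    obtain ⟨t, _, _, _, hw⟩ := hs j hj
    exact wp_basic hw
  have hineq : ∀ j ≤ N + 1, ineqOf (f j).2 = ineqOf (f 0).2 := by
    intro j
    induction j with
    | zero => intro _; rfl
    | succ j ih => intro hj; rw [← (hbasic j (by omega)).2.2.1]; exact ih (by omega)
  have hdiag : ∀ a n, a + n ≤ N + 1 → (f (a + n)).2.isDiag = true → (f a).2.isDiag = true := by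
    intro a n
    induction n with
    | zero => intro _ h; exact h
    | succ n ih => intro hj h; exact ih (by omega) ((hbasic (a + n) (by omega)).2.2.2 h)
  obtain ⟨a, b, hab, heq⟩ : ∃ a b : Fin (N + 1), a < b ∧
      ((f a).1, key (f a).2) = ((f b).1, key (f b).2) := by
    have hcard : Fintype.card (Q × X × Option X) < Fintype.card (Fin (N + 1)) := by
      simp [hN]
    obtain ⟨a, b, hne, he⟩ := Fintype.exists_ne_map_eq_of_card_lt
      (fun a : Fin (N + 1) => ((f a).1, key (f a).2)) hcard
    rcases lt_or_gt_of_ne hne with h1 | h1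
    · exact ⟨a, b, h1, he⟩
    · exact ⟨b, a, h1, he.symm⟩
  obtain ⟨a, ha⟩ := a
  obtain ⟨b, hb⟩ := b
  simp only [Fin.mk_lt_mk, Prod.mk.injEq] at hab heq
  obtain ⟨hq, hkey⟩ := heq
  obtain ⟨n, rfl⟩ : ∃ n, b = a + n := ⟨b - a, by omega⟩
  obtain ⟨he, hde⟩ := eq_sh (hbasic a (by omega)).1 (hbasic (a + n) (by omega)).1 hkey
    ((hineq a (by omega)).trans (hineq (a + n) (by omega)).symm)
  set d := (f (a + n)).2.constOf - (f a).2.constOf with hdd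
  have hd0 : d ≠ 0 := by
    intro h0
    rw [h0, sh_zero] at he
    refine hnm (a + n) (by omega) a (by omega) ?_
    rw [he, ← hq]
    exact hm a (by omega)
  have hsame : ∀ j, a ≤ j → j ≤ a + n → (f j).2.isDiag = (f a).2.isDiag := by
    intro j h1 h2
    obtain ⟨m, rfl⟩ : ∃ m, j = a + m := ⟨j - a, by omega⟩
    obtain ⟨r, rfl⟩ : ∃ r, n = m + r := ⟨n - m, by omega⟩
    have i1 := hdiag a m (by omega)
    have i2 := hdiag (a + m) r (by omega)
    rw [← add_assoc] at hde
    rw [hde] at i2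
    exact Bool.eq_iff_iff.2 ⟨i1, i2⟩
  by_cases hok : Ok d (f a).2
  · exact pump A f a n d hd0 (fun j _ h2 => hs j (by omega)) hsame hq.symm he hok
      (hm a (by omega)) (h _)
  · obtain ⟨hnd1, hneg⟩ := not_or.1 hok
    have hnd1 : (f a).2.isDiag = false := by simpa using hnd1
    obtain ⟨r, hr⟩ : ∃ r, N + 1 = a + n + r := ⟨N + 1 - (a + n), by omega⟩
    have hback : sh (-d) (f (a + n)).2 = (f a).2 := by
      have := eq_sh (hbasic (a + n) (by omega)).1 (hbasic a (by omega)).1 hkey.symm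
        ((hineq (a + n) (by omega)).trans (hineq a (by omega)).symm)
      rw [this.1, hdd, neg_sub, ← this.1]
    have hfalse : ∀ j, a + n ≤ j → j ≤ a + n + r → (f j).2.isDiag = false := by
      intro j h1 h2
      obtain ⟨m, rfl⟩ : ∃ m, j = a + n + m := ⟨j - (a + n), by omega⟩
      have := hdiag (a + n) m (by omega)
      rw [hde, hnd1] at this
      simpa using this
    have hp := path_sh A f (a + n) r (-d) (fun j _ h2 => hs j (by omega))
      (fun j h1 h2 => (hfalse j h1 h2).trans (hfalse (a + n) le_rfl (by omega)).symm)
      (Or.inr (by omega)) a (by rw [hback, ← hq]; exact hm a (by omega))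
    have hψd := hfalse (a + n + r) (by omega) le_rfl
    rw [← hr, hf] at hp hψd
    exact hnd _ (iter_mono A (by omega) q hp) (dom_sh hψd (by omega))

end

end UProof

/-! ## The statement -/

theorem stmt16 {Q X : Type} [Fintype Q] [Fintype X] [DecidableEq X] (A : UTA Q X) :
    (∀ q, (⋃ i : ℕ, iterG A i q).Finite) ↔
      ∀ q, GreenAt A (1 + Fintype.card Q * (Fintype.card X * (Fintype.card X + 1))) q := by
  rw [Nat.add_comm 1]
  exact ⟨UProof.green_of_finite A, UProof.finite_of_green A _⟩
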